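/- Let f, g : ℝⁿ → [0,∞) be Borel measurable functions vanishing at infinity and let 0 < λ < 1. Then ∫_{ℝⁿ} (f ⋆_λ g)(v) dv ≥ ∫_{ℝⁿ} (f* ⋆_λ g*)(v) dv, where (f ⋆_λ g)(v) = sup{ f(x)^λ g(y)^{1−λ} : v = λx + (1−λ)y }. -/

import Mathlib

open MeasureTheory Filter Pointwise ENNReal

noncomputable section

/-- The sup-convolution `(f ⋆_λ g)(v) = sup {f(x)^λ g(y)^{1-λ} : v = λx + (1-λ)y}`. -/
def supConv {n : ℕ} (lam : ℝ) (f g : EuclideanSpace ℝ (Fin n) → ℝ)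
    (v : EuclideanSpace ℝ (Fin n)) : ℝ≥0∞ :=
  ⨆ (x : EuclideanSpace ℝ (Fin n)) (y : EuclideanSpace ℝ (Fin n))
    (_ : v = lam • x + (1 - lam) • y),
    ENNReal.ofReal (f x ^ lam * g y ^ (1 - lam))

/-- `A*`: the open origin-centered Euclidean ball with the same volume as `A`. -/
def rearrangedSet (n : ℕ) (A : Set (EuclideanSpace ℝ (Fin n))) :
    Set (EuclideanSpace ℝ (Fin n)) :=
  Metric.ball 0 ((volume A / volume (Metric.ball (0 : EuclideanSpace ℝ (Fin n)) 1)).toReal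
    ^ (1 / (n : ℝ)))

/-- The symmetric decreasing rearrangement `f*(x) = ∫₀^∞ 1_{{f>t}*}(x) dt`. -/
def symmDecRearrangement {n : ℕ} (f : EuclideanSpace ℝ (Fin n) → ℝ)
    (x : EuclideanSpace ℝ (Fin n)) : ℝ :=
  ∫ t in Set.Ioi (0 : ℝ), (rearrangedSet n {y | t < f y}).indicator (fun _ => (1 : ℝ)) x

theorem aux_bm1_compact {K L C : Set ℝ} (hK : IsCompact K) (hL : IsCompact L)
    (hKn : K.Nonempty) (hLn : L.Nonempty) (h : ∀ a ∈ K, ∀ b ∈ L, a + b ∈ C) :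
    volume K + volume L ≤ volume C := by
  have ha := hK.sSup_mem hKn
  have hb := hL.sInf_mem hLn
  set a := sSup K
  set b := sInf L
  have h1 : volume ((fun x => x + b) '' K) = volume K := by simp
  have h2 : volume ((fun x => a + x) '' L) = volume L := by simp
  have hm : MeasurableSet ((fun x => a + x) '' L) :=
    (hL.image (by fun_prop)).measurableSet
  have hd : AEDisjoint volume ((fun x => x + b) '' K) ((fun x => a + x) '' L) := by
    refine measure_mono_null (t := {a + b}) ?_ (by simp)
    rintro x ⟨⟨k, hk, rfl⟩, ⟨l, hl, hkl⟩⟩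
    have h3 : k ≤ a := le_csSup hK.bddAbove hk
    have h4 : b ≤ l := csInf_le hL.bddBelow hl
    simp only [Set.mem_singleton_iff] at *
    linarith
  rw [← h1, ← h2, ← measure_union₀ hm.nullMeasurableSet hd]
  refine measure_mono ?_
  rintro x (⟨k, hk, rfl⟩ | ⟨l, hl, rfl⟩)
  · exact h _ hk _ hb
  · exact h _ ha _ hl

theorem aux_bm1 {A B C : Set ℝ} (hA : MeasurableSet A) (hB : MeasurableSet B)
    (hAn : A.Nonempty) (hBn : B.Nonempty) (h : ∀ a ∈ A, ∀ b ∈ B, a + b ∈ C) :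
    volume A + volume B ≤ volume C := by
  obtain ⟨a0, ha0⟩ := hAn
  obtain ⟨b0, hb0⟩ := hBn
  rw [hA.measure_eq_iSup_isCompact, hB.measure_eq_iSup_isCompact]
  simp_rw [iSup_and']
  refine ENNReal.biSup_add_biSup_le' ⟨∅, by simp⟩ ⟨∅, by simp⟩ ?_
  rintro K ⟨hKA, hK⟩ L ⟨hLB, hL⟩
  refine le_trans (add_le_add (measure_mono (Set.subset_insert a0 K))
    (measure_mono (Set.subset_insert b0 L))) ?_
  refine aux_bm1_compact (hK.insert a0) (hL.insert b0) (Set.insert_nonempty _ _)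
    (Set.insert_nonempty _ _) ?_
  intro a ha b hb
  exact h a (Set.insert_subset ha0 hKA ha) b (Set.insert_subset hb0 hLB hb)

theorem aux_layer {α : Type*} [MeasurableSpace α] (μ : Measure α) [SFinite μ]
    {f : α → ℝ≥0∞} (hf : Measurable f) :
    ∫⁻ x, f x ∂μ = ∫⁻ t in Set.Ioi (0 : ℝ), μ {x | ENNReal.ofReal t < f x} := by
  have h1 : ∀ a : ℝ≥0∞, a = ∫⁻ t in Set.Ioi (0 : ℝ),
      {t : ℝ | ENNReal.ofReal t < a}.indicator (fun _ => (1 : ℝ≥0∞)) t := by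
    intro a
    have hm : MeasurableSet {t : ℝ | ENNReal.ofReal t < a} :=
      measurableSet_lt ENNReal.measurable_ofReal measurable_const
    rw [lintegral_indicator hm, setLIntegral_one, Measure.restrict_apply hm]
    by_cases ha : a = ⊤
    · subst ha
      simp
    · have : {t : ℝ | ENNReal.ofReal t < a} ∩ Set.Ioi 0 = Set.Ioo 0 a.toReal := by
        ext t
        simp only [Set.mem_inter_iff, Set.mem_ofPred_eq, Set.mem_Ioi, Set.mem_Ioo]
        constructor
        · rintro ⟨h, h0⟩
          exact ⟨h0, (ENNReal.ofReal_lt_iff_lt_toReal h0.le ha).1 h⟩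
        · rintro ⟨h0, h⟩
          exact ⟨(ENNReal.ofReal_lt_iff_lt_toReal h0.le ha).2 h, h0⟩
      rw [this]
      simp [ha]
  have hS : MeasurableSet {p : α × ℝ | ENNReal.ofReal p.2 < f p.1} :=
    measurableSet_lt (by fun_prop) (by fun_prop)
  calc ∫⁻ x, f x ∂μ = ∫⁻ x, (∫⁻ t in Set.Ioi (0 : ℝ),
      {p : α × ℝ | ENNReal.ofReal p.2 < f p.1}.indicator (fun _ => (1 : ℝ≥0∞)) (x, t)) ∂μ := by
        refine lintegral_congr fun x => ?_
        exact h1 (f x)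
    _ = ∫⁻ t in Set.Ioi (0 : ℝ), ∫⁻ x,
      {p : α × ℝ | ENNReal.ofReal p.2 < f p.1}.indicator (fun _ => (1 : ℝ≥0∞)) (x, t) ∂μ := by
        refine lintegral_lintegral_swap ?_
        exact (measurable_const.indicator hS).aemeasurable
    _ = _ := by
        refine lintegral_congr fun t => ?_
        have hm : MeasurableSet {x | ENNReal.ofReal t < f x} :=
          measurableSet_lt measurable_const hf
        have := lintegral_indicator_one (μ := μ) hm
        rw [← this]
        rfl

theorem aux_smul_vol (c : ℝ) (hc : 0 < c) (A : Set ℝ) :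
    volume (c • A) = ENNReal.ofReal c * volume A := by
  rw [Measure.addHaar_smul]
  simp [abs_of_pos hc]

theorem aux_rpow_mul_lt {a b t : ℝ≥0∞} {l : ℝ} (hl0 : 0 < l) (hl1 : l < 1) 
    (ha : t < a) (hb : t < b) : t < a ^ l * b ^ (1 - l) := by
  have ht : t ≠ ⊤ := ne_top_of_lt ha
  calc t = t ^ l * t ^ (1 - l) := by
        rcases eq_or_ne t 0 with rfl | h0
        · simp [hl0]
        · rw [← ENNReal.rpow_add _ _ h0 ht]; simp
    _ < a ^ l * b ^ (1 - l) :=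
        ENNReal.mul_lt_mul (ENNReal.rpow_lt_rpow ha hl0) (ENNReal.rpow_lt_rpow hb (by linarith))

theorem aux_pl1_norm {l : ℝ} (hl0 : 0 < l) (hl1 : l < 1) {f g h : ℝ → ℝ≥0∞}
    (hf : Measurable f) (hg : Measurable g) (hh : Measurable h)
    (hfs : ⨆ x, f x = 1) (hgs : ⨆ x, g x = 1)
    (H : ∀ x y, f x ^ l * g y ^ (1 - l) ≤ h (l * x + (1 - l) * y)) :
    ENNReal.ofReal l * (∫⁻ x, f x) + ENNReal.ofReal (1 - l) * (∫⁻ x, g x) ≤ ∫⁻ x, h x := by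
  have hl2 : 0 < 1 - l := by linarith
  have hmeas : ∀ u : ℝ → ℝ≥0∞, Measurable (fun t : ℝ => volume {x | ENNReal.ofReal t < u x}) := by
    intro u
    refine Antitone.measurable ?_
    intro s t hst
    exact measure_mono fun x hx => lt_of_le_of_lt (ENNReal.ofReal_le_ofReal hst) hx
  rw [aux_layer volume hf, aux_layer volume hg, aux_layer volume hh,
    ← lintegral_const_mul _ (hmeas f), ← lintegral_const_mul _ (hmeas g),
    ← lintegral_add_left ((hmeas f).const_mul _)]
  refine lintegral_mono fun t => ?_
  by_cases ht : ENNReal.ofReal t < 1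
  · have hmf : MeasurableSet {x | ENNReal.ofReal t < f x} := measurableSet_lt measurable_const hf
    have hmg : MeasurableSet {x | ENNReal.ofReal t < g x} := measurableSet_lt measurable_const hg
    simp only []
    rw [← aux_smul_vol l hl0, ← aux_smul_vol (1 - l) hl2]
    refine aux_bm1 (hmf.const_smul₀ _) (hmg.const_smul₀ _) ?_ ?_ ?_
    · obtain ⟨x, hx⟩ := lt_iSup_iff.1 (hfs ▸ ht : ENNReal.ofReal t < ⨆ x, f x)
      exact Set.Nonempty.smul_set ⟨x, hx⟩
    · obtain ⟨x, hx⟩ := lt_iSup_iff.1 (hgs ▸ ht : ENNReal.ofReal t < ⨆ x, g x)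
      exact Set.Nonempty.smul_set ⟨x, hx⟩
    · rintro _ ⟨x, hx, rfl⟩ _ ⟨y, hy, rfl⟩
      exact lt_of_lt_of_le (aux_rpow_mul_lt hl0 hl1 hx hy) (H x y)
  · have h1 : {x | ENNReal.ofReal t < f x} = ∅ := by
      ext x
      simp only [Set.mem_ofPred_eq, Set.mem_empty_iff_false, iff_false, not_lt]
      exact ((le_iSup f x).trans hfs.le).trans (not_lt.1 ht)
    have h2 : {x | ENNReal.ofReal t < g x} = ∅ := by
      ext x
      simp only [Set.mem_ofPred_eq, Set.mem_empty_iff_false, iff_false, not_lt]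
      exact ((le_iSup g x).trans hgs.le).trans (not_lt.1 ht)
    simp [h1, h2]

theorem aux_amgm {l : ℝ} (hl0 : 0 < l) (hl1 : l < 1) (a b : ℝ≥0∞) :
    a ^ l * b ^ (1 - l) ≤ ENNReal.ofReal l * a + ENNReal.ofReal (1 - l) * b := by
  have hl2 : 0 < 1 - l := by linarith
  rcases eq_or_ne a ⊤ with rfl | ha
  · rw [ENNReal.mul_top (by simpa using hl0)]; simp
  rcases eq_or_ne b ⊤ with rfl | hb
  · rw [ENNReal.mul_top (by simpa using hl1)]; simp
  lift a to NNReal using ha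
  lift b to NNReal using hb
  have := NNReal.geom_mean_le_arith_mean2_weighted ⟨l, hl0.le⟩ ⟨1 - l, hl2.le⟩ a b
    (NNReal.eq (by show l + (1 - l) = 1; ring))
  rw [← ENNReal.coe_rpow_of_nonneg _ hl0.le, ← ENNReal.coe_rpow_of_nonneg _ hl2.le,
    ENNReal.ofReal_eq_coe_nnreal hl0.le, ENNReal.ofReal_eq_coe_nnreal hl2.le]
  exact_mod_cast this

theorem aux_pl1_bdd {l : ℝ} (hl0 : 0 < l) (hl1 : l < 1) {f g h : ℝ → ℝ≥0∞}
    (hf : Measurable f) (hg : Measurable g) (hh : Measurable h)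
    (hfs : ⨆ x, f x ≠ ⊤) (hgs : ⨆ x, g x ≠ ⊤)
    (H : ∀ x y, f x ^ l * g y ^ (1 - l) ≤ h (l * x + (1 - l) * y)) :
    (∫⁻ x, f x) ^ l * (∫⁻ x, g x) ^ (1 - l) ≤ ∫⁻ x, h x := by
  have hl2 : 0 < 1 - l := by linarith
  set a := ⨆ x, f x with ha
  set b := ⨆ x, g x with hb
  rcases eq_or_ne a 0 with ha0 | ha0
  · have : ∀ x, f x = 0 := fun x => le_zero_iff.1 ((le_iSup f x).trans ha0.le)
    simp [this, hl0]
  rcases eq_or_ne b 0 with hb0 | hb0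
  · have : ∀ x, g x = 0 := fun x => le_zero_iff.1 ((le_iSup g x).trans hb0.le)
    simp [this, hl1]
  set c := a ^ l * b ^ (1 - l) with hc
  have hc0 : c ≠ 0 := by
    simp [hc, ENNReal.rpow_eq_zero_iff, ha0, hb0, hfs, hgs]
  have hct : c ≠ ⊤ := ENNReal.mul_ne_top (ENNReal.rpow_ne_top_of_nonneg hl0.le hfs)
    (ENNReal.rpow_ne_top_of_nonneg hl2.le hgs)
  have hcinv : c⁻¹ = (a⁻¹) ^ l * (b⁻¹) ^ (1 - l) := by
    rw [hc, ENNReal.mul_inv, ENNReal.inv_rpow, ENNReal.inv_rpow]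
    · left; simp [ENNReal.rpow_eq_zero_iff, ha0, hfs]
    · left; exact ENNReal.rpow_ne_top_of_nonneg hl0.le hfs
  have key := aux_pl1_norm hl0 hl1 (f := fun x => a⁻¹ * f x) (g := fun x => b⁻¹ * g x)
    (h := fun x => c⁻¹ * h x) (hf.const_mul _) (hg.const_mul _) (hh.const_mul _)
    (by rw [← ENNReal.mul_iSup]; exact ENNReal.inv_mul_cancel ha0 hfs)
    (by rw [← ENNReal.mul_iSup]; exact ENNReal.inv_mul_cancel hb0 hgs)
    (by
      intro x y
      rw [ENNReal.mul_rpow_of_nonneg _ _ hl0.le, ENNReal.mul_rpow_of_nonneg _ _ hl2.le,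
        mul_mul_mul_comm, ← hcinv]
      gcongr
      exact H x y)
  have key2 := (aux_amgm hl0 hl1 _ _).trans key
  rw [lintegral_const_mul _ hf, lintegral_const_mul _ hg, lintegral_const_mul _ hh,
    ENNReal.mul_rpow_of_nonneg _ _ hl0.le, ENNReal.mul_rpow_of_nonneg _ _ hl2.le,
        mul_mul_mul_comm, ← hcinv] at key2
  exact (ENNReal.mul_le_mul_iff_right (ENNReal.inv_ne_zero.2 hct) (ENNReal.inv_ne_top.2 hc0)).1 key2

theorem aux_trunc {f : ℝ → ℝ≥0∞} (hf : Measurable f) :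
    Tendsto (fun N : ℕ => ∫⁻ x, min (f x) N) atTop (nhds (∫⁻ x, f x)) := by
  refine lintegral_tendsto_of_tendsto_of_monotone (fun N => (hf.min measurable_const).aemeasurable)
    (Eventually.of_forall fun x => ?_) (Eventually.of_forall fun x => ?_)
  · intro M N hMN
    exact min_le_min le_rfl (by exact_mod_cast hMN)
  · have := (tendsto_const_nhds (x := f x)).min ENNReal.tendsto_nat_nhds_top
    simpa using this

theorem aux_pl1 {l : ℝ} (hl0 : 0 < l) (hl1 : l < 1) {f g h : ℝ → ℝ≥0∞}
    (hf : Measurable f) (hg : Measurable g) (hh : Measurable h)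
    (H : ∀ x y, f x ^ l * g y ^ (1 - l) ≤ h (l * x + (1 - l) * y)) :
    (∫⁻ x, f x) ^ l * (∫⁻ x, g x) ^ (1 - l) ≤ ∫⁻ x, h x := by
  have hl2 : 0 < 1 - l := by linarith
  rcases eq_or_ne (∫⁻ x, f x) 0 with h0 | h0
  · simp [h0, hl0]
  rcases eq_or_ne (∫⁻ x, g x) 0 with h1 | h1
  · simp [h1, hl1]
  have T : Tendsto (fun N : ℕ => (∫⁻ x, min (f x) N) ^ l * (∫⁻ x, min (g x) N) ^ (1 - l)) atTop
      (nhds ((∫⁻ x, f x) ^ l * (∫⁻ x, g x) ^ (1 - l))) := by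
    refine ENNReal.Tendsto.mul ((ENNReal.continuous_rpow_const.tendsto _).comp (aux_trunc hf)) ?_
      ((ENNReal.continuous_rpow_const.tendsto _).comp (aux_trunc hg)) ?_
    · left; simp [ENNReal.rpow_eq_zero_iff, h0, hl0.le]
    · left; simp [ENNReal.rpow_eq_zero_iff, h1, hl1.le]
  refine le_of_tendsto' T fun N => ?_
  refine aux_pl1_bdd hl0 hl1 (hf.min measurable_const) (hg.min measurable_const) hh ?_ ?_ ?_
  · exact ne_top_of_le_ne_top (ENNReal.natCast_ne_top N) (iSup_le fun x => min_le_right _ _)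
  · exact ne_top_of_le_ne_top (ENNReal.natCast_ne_top N) (iSup_le fun x => min_le_right _ _)
  · intro x y
    refine le_trans ?_ (H x y)
    gcongr
    · exact min_le_left _ _
    · exact min_le_left _ _

theorem aux_pi_succ {n : ℕ} {f : (Fin (n + 1) → ℝ) → ℝ≥0∞} (hf : Measurable f) :
    ∫⁻ x, f x = ∫⁻ a : ℝ, ∫⁻ y : Fin n → ℝ, f (Fin.cons a y) := by
  have e := (volume_preserving_piFinSuccAbove (fun _ : Fin (n + 1) => ℝ) 0).symm
  rw [← e.lintegral_comp hf, Measure.volume_eq_prod, lintegral_prod _ (by fun_prop)]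
  simp [MeasurableEquiv.piFinSuccAbove, Fin.insertNthEquiv]

theorem aux_cons_meas {n : ℕ} : Measurable (fun p : ℝ × (Fin n → ℝ) =>
    (Fin.cons p.1 p.2 : Fin (n + 1) → ℝ)) := by
  refine measurable_pi_lambda _ fun i => ?_
  refine Fin.cases ?_ (fun j => ?_) i
  · simpa using measurable_fst
  · simp only [Fin.cons_succ]; fun_prop

theorem aux_pl {l : ℝ} (hl0 : 0 < l) (hl1 : l < 1) (n : ℕ) : ∀ {f g h : (Fin n → ℝ) → ℝ≥0∞}
    (_ : Measurable f) (_ : Measurable g) (_ : Measurable h)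
    (_ : ∀ x y, f x ^ l * g y ^ (1 - l) ≤ h (l • x + (1 - l) • y)),
    (∫⁻ x, f x) ^ l * (∫⁻ x, g x) ^ (1 - l) ≤ ∫⁻ x, h x := by
  induction n with
  | zero =>
    intro f g h hf hg hh H
    rw [lintegral_unique, lintegral_unique, lintegral_unique]
    have : (volume (Set.univ : Set (Fin 0 → ℝ))) = 1 := by
      simp [volume_pi]
    rw [this]
    simp only [mul_one]
    convert H default default
  | succ n ih =>
    intro f g h hf hg hh H
    have hc := @aux_cons_meas n
    rw [aux_pi_succ hf, aux_pi_succ hg, aux_pi_succ hh]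
    refine aux_pl1 hl0 hl1 (Measurable.lintegral_prod_right (hf.comp hc))
      (Measurable.lintegral_prod_right (hg.comp hc))
      (Measurable.lintegral_prod_right (hh.comp hc)) ?_
    intro a b
    have hs : ∀ a : ℝ, Measurable (fun y : Fin n → ℝ => (Fin.cons a y : Fin (n + 1) → ℝ)) :=
      fun a => hc.comp (measurable_const.prodMk measurable_id)
    refine ih (hf.comp (hs a)) (hg.comp (hs b)) (hh.comp (hs _)) ?_
    intro x y
    convert H (Fin.cons a x) (Fin.cons b y) using 2
    ext i
    refine Fin.cases ?_ (fun j => ?_) i <;> simp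

theorem aux_bm_log {n : ℕ} {l : ℝ} (hl0 : 0 < l) (hl1 : l < 1)
    {A B C : Set (EuclideanSpace ℝ (Fin n))}
    (hA : MeasurableSet A) (hB : MeasurableSet B) (hC : MeasurableSet C)
    (H : ∀ a ∈ A, ∀ b ∈ B, l • a + (1 - l) • b ∈ C) :
    volume A ^ l * volume B ^ (1 - l) ≤ volume C := by
  have hl2 : 0 < 1 - l := by linarith
  have e := PiLp.volume_preserving_toLp (Fin n)
  have hA' := e.measurable hA
  have hB' := e.measurable hB
  have hC' := e.measurable hC
  rw [← e.measure_preimage hA.nullMeasurableSet, ← e.measure_preimage hB.nullMeasurableSet,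
    ← e.measure_preimage hC.nullMeasurableSet, ← lintegral_indicator_one hA',
    ← lintegral_indicator_one hB', ← lintegral_indicator_one hC']
  refine aux_pl hl0 hl1 n (measurable_one.indicator hA') (measurable_one.indicator hB')
    (measurable_one.indicator hC') ?_
  intro x y
  by_cases hx : WithLp.toLp 2 x ∈ A
  · by_cases hy : WithLp.toLp 2 y ∈ B
    · have h1 : l • x + (1 - l) • y ∈ (WithLp.toLp 2) ⁻¹' C := by
        simpa using H _ hx _ hy
      rw [Set.indicator_of_mem h1]
      rw [Set.indicator_of_mem (show x ∈ (WithLp.toLp 2) ⁻¹' A from hx),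
        Set.indicator_of_mem (show y ∈ (WithLp.toLp 2) ⁻¹' B from hy)]
      simp
    · rw [Set.indicator_of_notMem (show y ∉ (WithLp.toLp 2) ⁻¹' B from hy)]
      simp [hl1]
  · rw [Set.indicator_of_notMem (show x ∉ (WithLp.toLp 2) ⁻¹' A from hx)]
    simp [hl0]

theorem aux_smul_volE {n : ℕ} {c : ℝ} (hc : 0 < c) (A : Set (EuclideanSpace ℝ (Fin n))) :
    volume (c • A) = ENNReal.ofReal c ^ n * volume A := by
  rw [Measure.addHaar_smul, abs_of_nonneg (by positivity), ENNReal.ofReal_pow hc.le]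
  simp

theorem aux_bm {n : ℕ} {l : ℝ} (hl0 : 0 < l) (hl1 : l < 1)
    {A B C : Set (EuclideanSpace ℝ (Fin n))}
    (hA : MeasurableSet A) (hB : MeasurableSet B) (hC : MeasurableSet C)
    (H : ∀ a ∈ A, ∀ b ∈ B, l • a + (1 - l) • b ∈ C) {r s : ℝ} (hr : 0 < r) (hs : 0 < s)
    {w : ℝ≥0∞} (hw0 : w ≠ 0) (hwt : w ≠ ⊤)
    (hAr : volume A = ENNReal.ofReal r ^ n * w) (hBs : volume B = ENNReal.ofReal s ^ n * w) :
    ENNReal.ofReal (l * r + (1 - l) * s) ^ n * w ≤ volume C := by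
  have hl2 : 0 < 1 - l := by linarith
  set M := l * r + (1 - l) * s with hM
  have hMpos : 0 < M := by positivity
  have key := aux_bm_log (l := l * r / M) (A := r⁻¹ • A) (B := s⁻¹ • B) (C := M⁻¹ • C)
    (by positivity) (by rw [div_lt_one hMpos, hM]; nlinarith [mul_pos hl2 hs])
    (hA.const_smul₀ _) (hB.const_smul₀ _) (hC.const_smul₀ _) (by
      rintro _ ⟨a, ha, rfl⟩ _ ⟨b, hb, rfl⟩
      refine ⟨_, H a ha b hb, ?_⟩
      have h1 : 1 - l * r / M = (1 - l) * s / M := by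
        field_simp
        rw [hM]; ring
      simp only [h1, smul_add, smul_smul]
      congr 2 <;> field_simp)
  have hcancel : ∀ c : ℝ, 0 < c → ENNReal.ofReal c⁻¹ ^ n * (ENNReal.ofReal c ^ n * w) = w := by
    intro c hc
    rw [← mul_assoc, ← mul_pow, ← ENNReal.ofReal_mul (by positivity), inv_mul_cancel₀ hc.ne']
    simp
  rw [aux_smul_volE (inv_pos.2 hr), aux_smul_volE (inv_pos.2 hs), aux_smul_volE (inv_pos.2 hMpos),
    hAr, hBs, hcancel r hr, hcancel s hs, ← ENNReal.rpow_add _ _ hw0 hwt] at key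
  simp only [add_sub_cancel, ENNReal.rpow_one] at key
  calc ENNReal.ofReal M ^ n * w
      ≤ ENNReal.ofReal M ^ n * (ENNReal.ofReal M⁻¹ ^ n * volume C) := by gcongr
    _ = volume C := by
      rw [← mul_assoc, ← mul_pow, ← ENNReal.ofReal_mul (by positivity), mul_inv_cancel₀ hMpos.ne']
      simp

theorem aux_sigma {n : ℕ} {A : Set (EuclideanSpace ℝ (Fin n))} (hA : MeasurableSet A)
    (hfin : volume A < ⊤) : ∃ K : ℕ → Set (EuclideanSpace ℝ (Fin n)),
      (∀ k, IsCompact (K k)) ∧ (∀ k, K k ⊆ A) ∧ volume (⋃ k, K k) = volume A := by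
  rcases eq_or_ne (volume A) 0 with h0 | h0
  · exact ⟨fun _ => ∅, fun _ => isCompact_empty, fun _ => Set.empty_subset _, by simp [h0]⟩
  obtain ⟨u, -, hu, hlim⟩ := exists_seq_strictMono_tendsto' (pos_iff_ne_zero.2 h0)
  have : ∀ k, ∃ K ⊆ A, IsCompact K ∧ u k < volume K := fun k =>
    hA.exists_lt_isCompact (hu k).2
  choose K hKA hK hKu using this
  refine ⟨K, hK, hKA, le_antisymm (measure_mono (Set.iUnion_subset hKA)) ?_⟩
  exact le_of_tendsto' hlim fun k => (hKu k).le.trans (measure_mono (Set.subset_iUnion K k))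

theorem aux_C {n : ℕ} (hn : n ≠ 0) {l : ℝ} (hl0 : 0 < l) (hl1 : l < 1)
    {A B : Set (EuclideanSpace ℝ (Fin n))}
    (hA : MeasurableSet A) (hB : MeasurableSet B) (hAf : volume A < ⊤) (hBf : volume B < ⊤) :
    ∃ (R : ℝ) (C : Set (EuclideanSpace ℝ (Fin n))),
      (∀ x ∈ rearrangedSet n A, ∀ y ∈ rearrangedSet n B,
        l • x + (1 - l) • y ∈ Metric.ball (0 : EuclideanSpace ℝ (Fin n)) R) ∧
      MeasurableSet C ∧ (∀ v ∈ C, ∃ x ∈ A, ∃ y ∈ B, v = l • x + (1 - l) • y) ∧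
      volume (Metric.ball (0 : EuclideanSpace ℝ (Fin n)) R) ≤ volume C := by
  have hl2 : 0 < 1 - l := by linarith
  set w := volume (Metric.ball (0 : EuclideanSpace ℝ (Fin n)) 1) with hw
  have hw0 : w ≠ 0 := (Metric.measure_ball_pos _ _ one_pos).ne'
  have hwt : w ≠ ⊤ := measure_ball_lt_top.ne
  have hrad : ∀ D : Set (EuclideanSpace ℝ (Fin n)), volume D < ⊤ →
      volume D = ENNReal.ofReal ((volume D / w).toReal ^ (1 / (n : ℝ))) ^ n * w := by
    intro D hD
    have hfin : volume D / w ≠ ⊤ := ENNReal.div_ne_top hD.ne hw0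
    rw [← ENNReal.ofReal_pow (by positivity), one_div, Real.rpow_inv_natCast_pow (by positivity) hn,
      ENNReal.ofReal_toReal hfin, ENNReal.div_mul_cancel hw0 hwt]
  have hr0 : 0 ≤ (volume A / w).toReal ^ (1 / (n : ℝ)) := by positivity
  have hs0 : 0 ≤ (volume B / w).toReal ^ (1 / (n : ℝ)) := by positivity
  have hAr := hrad A hAf
  have hBs := hrad B hBf
  unfold rearrangedSet
  rw [← hw]
  set r := (volume A / w).toReal ^ (1 / (n : ℝ))
  set s := (volume B / w).toReal ^ (1 / (n : ℝ))
  rcases hr0.eq_or_lt with hr | hr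
  · refine ⟨0, ∅, ?_, MeasurableSet.empty, by simp, by simp⟩
    rw [← hr]; simp
  rcases hs0.eq_or_lt with hs | hs
  · refine ⟨0, ∅, ?_, MeasurableSet.empty, by simp, by simp⟩
    rw [← hs]; simp
  obtain ⟨K, hK, hKA, hKv⟩ := aux_sigma hA hAf
  obtain ⟨L, hL, hLB, hLv⟩ := aux_sigma hB hBf
  have hCm : MeasurableSet (⋃ i, ⋃ j, (l • K i + (1 - l) • L j)) :=
    MeasurableSet.iUnion fun i => MeasurableSet.iUnion fun j =>
      (((hK i).smul l).add ((hL j).smul (1 - l))).measurableSet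
  refine ⟨l * r + (1 - l) * s, ⋃ i, ⋃ j, (l • K i + (1 - l) • L j), ?_, hCm, ?_, ?_⟩
  · intro x hx y hy
    simp only [mem_ball_zero_iff] at *
    calc ‖l • x + (1 - l) • y‖ ≤ ‖l • x‖ + ‖(1 - l) • y‖ := norm_add_le _ _
      _ = l * ‖x‖ + (1 - l) * ‖y‖ := by
        rw [norm_smul, norm_smul, Real.norm_of_nonneg hl0.le, Real.norm_of_nonneg hl2.le]
      _ < _ := by nlinarith
  · intro v hv
    simp only [Set.mem_iUnion] at hv
    obtain ⟨i, j, _, ⟨x, hx, rfl⟩, _, ⟨y, hy, rfl⟩, rfl⟩ := hv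
    exact ⟨x, hKA i hx, y, hLB j hy, rfl⟩
  · rw [Measure.addHaar_ball_of_pos _ _ (by positivity), ENNReal.ofReal_pow (by positivity), ← hw,
      finrank_euclideanSpace_fin]
    refine aux_bm hl0 hl1 (A := ⋃ i, K i) (B := ⋃ j, L j)
      (MeasurableSet.iUnion fun i => (hK i).measurableSet)
      (MeasurableSet.iUnion fun i => (hL i).measurableSet) hCm ?_ hr hs hw0 hwt
      (hKv.trans hAr) (hLv.trans hBs)
    intro a ha b hb
    simp only [Set.mem_iUnion] at *
    obtain ⟨i, hi⟩ := ha
    obtain ⟨j, hj⟩ := hb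
    exact ⟨i, j, Set.add_mem_add (Set.smul_mem_smul_set hi) (Set.smul_mem_smul_set hj)⟩

theorem aux_symm_nonneg {n : ℕ} (f : EuclideanSpace ℝ (Fin n) → ℝ)
    (x : EuclideanSpace ℝ (Fin n)) : 0 ≤ symmDecRearrangement f x :=
  integral_nonneg fun _ => Set.indicator_nonneg (fun _ _ => zero_le_one) _

theorem aux_symm {n : ℕ} {f : EuclideanSpace ℝ (Fin n) → ℝ}
    (hfvan : ∀ t : ℝ, 0 < t → volume {x | t < f x} < ⊤) {t : ℝ} (ht : 0 < t)
    {x : EuclideanSpace ℝ (Fin n)} (hx : t < symmDecRearrangement f x) :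
    x ∈ rearrangedSet n {y | t < f y} := by
  by_contra hcon
  refine absurd hx (not_lt.2 ?_)
  have hle : ∀ s : ℝ, t ≤ s → rearrangedSet n {y | s < f y} ⊆ rearrangedSet n {y | t < f y} := by
    intro s hs
    refine Metric.ball_subset_ball ?_
    refine Real.rpow_le_rpow ENNReal.toReal_nonneg ?_ (by positivity)
    refine ENNReal.toReal_mono (ENNReal.div_ne_top (hfvan t ht).ne
      (Metric.measure_ball_pos _ _ one_pos).ne') ?_
    gcongr
  have hI : ∫ s in Set.Ioi (0 : ℝ), (Set.Ioo 0 t).indicator (fun _ => (1 : ℝ)) s = t := by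
    rw [integral_indicator measurableSet_Ioo, Measure.restrict_restrict measurableSet_Ioo,
      Set.inter_eq_left.2 Set.Ioo_subset_Ioi_self]
    simp [ht.le]
  refine le_trans ?_ hI.le
  refine integral_mono_of_nonneg
    (Eventually.of_forall fun _ => Set.indicator_nonneg (fun _ _ => zero_le_one) _) ?_ ?_
  · refine IntegrableOn.integrable_indicator ?_ measurableSet_Ioo
    rw [IntegrableOn, Measure.restrict_restrict measurableSet_Ioo,
      Set.inter_eq_left.2 Set.Ioo_subset_Ioi_self]
    exact integrable_const _
  · refine (ae_restrict_iff' measurableSet_Ioi).2 (Eventually.of_forall fun s hs => ?_)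
    by_cases hst : s < t
    · rw [Set.indicator_of_mem (show s ∈ Set.Ioo 0 t from ⟨hs, hst⟩)]
      exact Set.indicator_le_self' (fun _ _ => zero_le_one) _
    · beta_reduce
      rw [Set.indicator_of_notMem (fun h => hcon (hle s (not_lt.1 hst) h))]
      exact Set.indicator_nonneg (fun _ _ => zero_le_one) _

theorem aux_final {n : ℕ} {ι : Type*} [Countable ι] (W : ι → ℝ≥0∞) (R : ι → ℝ)
    (C : ι → Set (EuclideanSpace ℝ (Fin n))) (hC : ∀ i, MeasurableSet (C i))
    (hv : ∀ i, volume (Metric.ball (0 : EuclideanSpace ℝ (Fin n)) (R i)) ≤ volume (C i)) :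
    ∫⁻ v, ⨆ i, (Metric.ball (0 : EuclideanSpace ℝ (Fin n)) (R i)).indicator (fun _ => W i) v ≤
      ∫⁻ v, ⨆ i, (C i).indicator (fun _ => W i) v := by
  have hset : ∀ (D : ι → Set (EuclideanSpace ℝ (Fin n))) (t : ℝ≥0∞),
      {v | t < ⨆ i, (D i).indicator (fun _ => W i) v} = ⋃ i ∈ {i | t < W i}, D i := by
    intro D t
    ext v
    simp only [Set.mem_ofPred_eq, lt_iSup_iff, Set.mem_iUnion]
    refine exists_congr fun i => ?_
    by_cases h : v ∈ D i <;> simp [h]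
  rw [aux_layer volume (Measurable.iSup fun i => measurable_const.indicator measurableSet_ball),
    aux_layer volume (Measurable.iSup fun i => measurable_const.indicator (hC i))]
  refine lintegral_mono fun t => ?_
  simp only [hset]
  rw [measure_biUnion_eq_iSup (Set.to_countable _)]
  · refine iSup₂_le fun i hi => (hv i).trans (measure_mono ?_)
    exact Set.subset_biUnion_of_mem (u := C) hi
  · intro i hi j hj
    rcases le_total (R i) (R j) with h | h
    · exact ⟨j, hj, Metric.ball_subset_ball h, subset_rfl⟩
    · exact ⟨i, hi, subset_rfl, Metric.ball_subset_ball h⟩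

/-- Melbourne's rearrangement inequality for the sup-convolution:
`∫ (f ⋆_λ g) ≥ ∫ (f* ⋆_λ g*)`. -/
theorem stmt16 (n : ℕ) (lam : ℝ) (hlam0 : 0 < lam) (hlam1 : lam < 1)
    (f g : EuclideanSpace ℝ (Fin n) → ℝ)
    (hfmeas : Measurable f) (hgmeas : Measurable g)
    (hf0 : ∀ x, 0 ≤ f x) (hg0 : ∀ x, 0 ≤ g x)
    (hfvan : ∀ t : ℝ, 0 < t → volume {x | t < f x} < ⊤)
    (hgvan : ∀ t : ℝ, 0 < t → volume {x | t < g x} < ⊤) :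
    ∫⁻ v, supConv lam f g v ≥
      ∫⁻ v, supConv lam (symmDecRearrangement f) (symmDecRearrangement g) v := by
  rcases eq_or_ne n 0 with rfl | hn
  · have hz : ∀ (u : EuclideanSpace ℝ (Fin 0) → ℝ) x, symmDecRearrangement u x = 0 := by
      intro u x
      have : ∀ A, x ∈ rearrangedSet 0 A := by
        intro A
        simp [rearrangedSet, Subsingleton.elim x 0]
      simp [symmDecRearrangement, this, Measure.real]
    simp [supConv, hz, hlam0.ne']
  have hl2 : 0 < 1 - lam := by linarith
  let ι := {q : ℚ × ℚ // 0 < q.1 ∧ 0 < q.2}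
  have hex : ∀ i : ι, _ := fun i => aux_C hn hlam0 hlam1
    (A := {x | ((i.1.1 : ℚ) : ℝ) < f x}) (B := {x | ((i.1.2 : ℚ) : ℝ) < g x})
    (measurableSet_lt measurable_const hfmeas) (measurableSet_lt measurable_const hgmeas)
    (hfvan _ (by exact_mod_cast i.2.1)) (hgvan _ (by exact_mod_cast i.2.2))
  choose R C hR hCm hC hv using hex
  let W : ι → ℝ≥0∞ := fun i => ENNReal.ofReal ((i.1.1 : ℝ) ^ lam * (i.1.2 : ℝ) ^ (1 - lam))
  refine ge_iff_le.2 (le_trans (lintegral_mono ?_)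
    ((aux_final W R C hCm hv).trans (lintegral_mono ?_)))
  · intro v
    refine iSup_le fun x => iSup_le fun y => iSup_le fun hvxy => ?_
    have ha := aux_symm_nonneg f x
    have hb := aux_symm_nonneg g y
    have hfx := fun t ht => aux_symm hfvan (t := t) ht (x := x)
    have hgy := fun t ht => aux_symm hgvan (t := t) ht (x := y)
    generalize symmDecRearrangement f x = a at *
    generalize symmDecRearrangement g y = b at *
    rcases ha.eq_or_lt with rfl | ha
    · simp [hlam0.ne']
    rcases hb.eq_or_lt with rfl | hb
    · simp [hl2.ne']
    obtain ⟨p, -, hpa, hp⟩ := Real.exists_seq_rat_strictMono_tendsto a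
    obtain ⟨q, -, hqb, hq⟩ := Real.exists_seq_rat_strictMono_tendsto b
    have T : Tendsto (fun k => ENNReal.ofReal ((p k : ℝ) ^ lam * (q k : ℝ) ^ (1 - lam))) atTop
        (nhds (ENNReal.ofReal (a ^ lam * b ^ (1 - lam)))) :=
      ENNReal.tendsto_ofReal ((hp.rpow_const (Or.inl ha.ne')).mul
        (hq.rpow_const (Or.inl hb.ne')))
    refine le_of_tendsto T ?_
    filter_upwards [hp.eventually_const_lt ha, hq.eventually_const_lt hb] with k hpk hqk
    let i : ι := ⟨(p k, q k), by exact_mod_cast hpk, by exact_mod_cast hqk⟩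
    have hmem : v ∈ Metric.ball (0 : EuclideanSpace ℝ (Fin n)) (R i) := by
      rw [hvxy]
      exact hR i x (hfx _ hpk (hpa k)) y (hgy _ hqk (hqb k))
    refine le_trans ?_ (le_iSup _ i)
    rw [Set.indicator_of_mem hmem]
  · intro v
    refine iSup_le fun i => ?_
    by_cases hvi : v ∈ C i
    · rw [Set.indicator_of_mem hvi]
      obtain ⟨x, hx, y, hy, hvxy⟩ := hC i v hvi
      refine le_trans ?_ (le_iSup₂_of_le x y (le_iSup_of_le hvxy le_rfl))
      have h1 : (0 : ℝ) < i.1.1 := by exact_mod_cast i.2.1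
      have h2 : (0 : ℝ) < i.1.2 := by exact_mod_cast i.2.2
      have hx' : ((i.1.1 : ℚ) : ℝ) < f x := hx
      have hy' : ((i.1.2 : ℚ) : ℝ) < g y := hy
      refine ENNReal.ofReal_le_ofReal ?_
      have := hf0 x
      have := hg0 y
      gcongr
    · rw [Set.indicator_of_notMem hvi]
      exact zero_le

end
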